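/- The sequence μ(p,p,p) is strictly increasing, satisfies μ(p,p,p) < 3/√2 for every p ≥ 2, and converges to 3/√2 as p → ∞; moreover, for every y₀ in the open interval (1/2, 1) there exists p₀ such that μ(p,p,p) > 3/√2 − 2·y₀^p for all p ≥ p₀. -/

import Mathlib

/-- The vertex set of the tree `T_{p,q,r}`: a central vertex (`none`) together
with three arms of `p-1`, `q-1` and `r-1` vertices. -/
abbrev TVertex (p q r : ℕ) : Type := Option (Fin (p - 1) ⊕ (Fin (q - 1) ⊕ Fin (r - 1)))

/-- Entry recording an edge between positions `i` and `j` of a path. -/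
def pathEntry (i j : ℕ) : ℝ := if i + 1 = j ∨ j + 1 = i then 1 else 0

/-- Entry recording the edge from the central vertex to position `i` of an arm. -/
def tipEntry (i : ℕ) : ℝ := if i = 0 then 1 else 0

/-- The adjacency matrix of the tree `T_{p,q,r}`: a central vertex joined to one
end of each of three paths with `p-1`, `q-1`, and `r-1` vertices respectively. -/
def adjT (p q r : ℕ) : Matrix (TVertex p q r) (TVertex p q r) ℝ :=
  fun v w =>
    match v, w with
    | none, none => 0
    | none, some (Sum.inl i) => tipEntry i
    | none, some (Sum.inr (Sum.inl i)) => tipEntry i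
    | none, some (Sum.inr (Sum.inr i)) => tipEntry i
    | some (Sum.inl i), none => tipEntry i
    | some (Sum.inr (Sum.inl i)), none => tipEntry i
    | some (Sum.inr (Sum.inr i)), none => tipEntry i
    | some (Sum.inl i), some (Sum.inl j) => pathEntry i j
    | some (Sum.inr (Sum.inl i)), some (Sum.inr (Sum.inl j)) => pathEntry i j
    | some (Sum.inr (Sum.inr i)), some (Sum.inr (Sum.inr j)) => pathEntry i j
    | _, _ => 0

/-- `μ(p,q,r)`, the largest eigenvalue of the adjacency matrix of `T_{p,q,r}`. -/
noncomputable def muT (p q r : ℕ) : ℝ :=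
  sSup {μ : ℝ | ∃ x : TVertex p q r → ℝ, x ≠ 0 ∧ (adjT p q r).mulVec x = μ • x}

/-- Chebyshev-type sequence: `S 0 = 0`, `S 1 = 1`, `S (k+2) = m * S (k+1) - S k`. -/
def chebS (m : ℝ) : ℕ → ℝ
  | 0 => 0
  | 1 => 1
  | (k + 2) => m * chebS m (k + 1) - chebS m k

lemma chebS_succ (m : ℝ) (k : ℕ) : chebS m (k + 2) = m * chebS m (k + 1) - chebS m k := by
  rw [chebS]

lemma chebS_cont (k : ℕ) : Continuous (fun m => chebS m k) ∧
    Continuous (fun m => chebS m (k + 1)) := by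
  induction k with
  | zero => constructor <;> simp only [chebS] <;> fun_prop
  | succ k ih =>
    refine ⟨ih.2, ?_⟩
    simp only [chebS_succ]
    have h1 := ih.1
    have h2 := ih.2
    fun_prop

/-- Positivity propagates to larger parameters. -/
lemma chebS_mono {a b : ℝ} (hab : a ≤ b) (n : ℕ) (h : ∀ k, 1 ≤ k → k ≤ n → 0 < chebS a k) (k : ℕ)
    (hk : k + 1 ≤ n) : 0 < chebS b (k + 1) ∧
      chebS a (k + 1) * chebS b k ≤ chebS b (k + 1) * chebS a k := by
  induction k with
  | zero => simp [chebS]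
  | succ k ih =>
    obtain ⟨h1, h2⟩ := ih (by omega)
    have ha1 := h (k + 1) (by omega) (by omega)
    have ha2 := h (k + 2) (by omega) (by omega)
    have key : chebS a (k + 2) * chebS b (k + 1) ≤ chebS b (k + 2) * chebS a (k + 1) := by
      rw [chebS_succ, chebS_succ]
      nlinarith [mul_nonneg (sub_nonneg.2 hab) (mul_pos h1 ha1).le]
    refine ⟨?_, key⟩
    have : 0 < chebS b (k + 2) * chebS a (k + 1) := lt_of_lt_of_le (mul_pos ha2 h1) key
    exact pos_of_mul_pos_left this ha1.le

/-- Collatz–Wielandt upper bound. -/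
lemma eig_le {V : Type*} [Fintype V] (A : Matrix V V ℝ) (hA : ∀ v w, 0 ≤ A v w)
    (x : V → ℝ) (hx : ∀ v, 0 < x v) (c : ℝ) (hc : A.mulVec x = c • x)
    (l : ℝ) (y : V → ℝ) (hy : y ≠ 0) (hl : A.mulVec y = l • y) : l ≤ c := by
  classical
  obtain ⟨u, hu⟩ := Function.ne_iff.1 hy
  obtain ⟨v, -, hv⟩ := Finset.exists_max_image Finset.univ (fun v => |y v| / x v)
    ⟨u, Finset.mem_univ u⟩
  set M := |y v| / x v with hM
  have hyv : |y v| = M * x v := by rw [hM]; field_simp [(hx v).ne']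
  have hMpos : 0 < M := lt_of_lt_of_le (div_pos (abs_pos.2 hu) (hx u)) (hv u (Finset.mem_univ u))
  have hall : ∀ w, |y w| ≤ M * x w := fun w => (div_le_iff₀ (hx w)).1 (hv w (Finset.mem_univ w))
  have e1 : ∑ w, A v w * y w = l * y v := by
    have := congrFun hl v
    simpa [Matrix.mulVec, dotProduct] using this
  have e2 : ∑ w, A v w * x w = c * x v := by
    have := congrFun hc v
    simpa [Matrix.mulVec, dotProduct] using this
  have : |l| * |y v| ≤ c * |y v| := by
    calc |l| * |y v| = |∑ w, A v w * y w| := by rw [e1, abs_mul]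
      _ ≤ ∑ w, |A v w * y w| := Finset.abs_sum_le_sum_abs _ _
      _ ≤ ∑ w, M * (A v w * x w) := by
          apply Finset.sum_le_sum
          intro w _
          rw [abs_mul, abs_of_nonneg (hA v w)]
          nlinarith [mul_le_mul_of_nonneg_left (hall w) (hA v w)]
      _ = c * |y v| := by rw [← Finset.mul_sum, e2, hyv]; ring
  have hpos : 0 < |y v| := by rw [hyv]; exact mul_pos hMpos (hx v)
  exact (le_abs_self l).trans (le_of_mul_le_mul_right this hpos)

lemma sum_tip (n : ℕ) (f : ℕ → ℝ) :
    ∑ j : Fin n, tipEntry j * f j = if 0 < n then f 0 else 0 := by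
  rw [Fin.sum_univ_eq_sum_range (fun j => tipEntry j * f j) n]
  simp [tipEntry]

lemma sum_path (n i : ℕ) (hi : i < n) (f : ℕ → ℝ) :
    ∑ j : Fin n, pathEntry i j * f j =
      (if i + 1 < n then f (i + 1) else 0) + (if 0 < i then f (i - 1) else 0) := by
  rw [Fin.sum_univ_eq_sum_range (fun j => pathEntry i j * f j) n]
  have : ∀ j, pathEntry i j * f j = (if i + 1 = j then f j else 0) +
      (if j = i - 1 then (if 0 < i then f j else 0) else 0) := by
    intro j
    unfold pathEntry
    by_cases h1 : i + 1 = j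
    · have h2 : ¬ (j = i - 1) := by omega
      simp [h1, h2]
    · by_cases h2 : j + 1 = i
      · have h3 : j = i - 1 := by omega
        have h4 : 0 < i := by omega
        simp [h2, h1, ← h3, h4]
      · by_cases h3 : j = i - 1
        · have h4 : ¬ 0 < i := by omega
          simp [h1, h2, h4]
        · simp [h1, h2, h3]
  simp_rw [this]
  rw [Finset.sum_add_distrib, Finset.sum_ite_eq, Finset.sum_ite_eq']
  have : i - 1 < n := by omega
  simp [this]

/-- The symmetric vector. -/
def symVec (m : ℝ) (p : ℕ) : TVertex p p p → ℝ
  | none => chebS m p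
  | some (Sum.inl i) => chebS m (p - 1 - i)
  | some (Sum.inr (Sum.inl i)) => chebS m (p - 1 - i)
  | some (Sum.inr (Sum.inr i)) => chebS m (p - 1 - i)

lemma arm_eq (m : ℝ) (p : ℕ) (i : Fin (p - 1)) :
    tipEntry i * chebS m p + ∑ j : Fin (p - 1), pathEntry i j * chebS m (p - 1 - j)
      = m * chebS m (p - 1 - i) := by
  rw [sum_path (p - 1) i i.2 (fun j => chebS m (p - 1 - j))]
  obtain ⟨i, hi⟩ := i
  obtain ⟨d, hd⟩ : ∃ d, p = d + 2 + i := ⟨p - 2 - i, by omega⟩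
  subst hd
  have e1 : d + 2 + i - 1 - i = d + 1 := by omega
  have e2 : d + 2 + i - 1 - (i + 1) = d := by omega
  have e3 : (if i + 1 < d + 2 + i - 1 then chebS m d else 0) = chebS m d := by
    split_ifs with h
    · rfl
    · have : d = 0 := by omega
      subst this; simp [chebS]
  simp only [e1, e2, e3]
  have := chebS_succ m d
  rcases Nat.eq_zero_or_pos i with h | h
  · subst h
    simp [tipEntry, this]
  · have e4 : d + 2 + i - 1 - (i - 1) = d + 2 := by omega
    rw [e4, this]
    simp [tipEntry, h.ne', h]

lemma symVec_eig (m : ℝ) (p : ℕ) (hp : 2 ≤ p) (hF : chebS m (p + 1) = 2 * chebS m (p - 1)) :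
    (adjT p p p).mulVec (symVec m p) = m • symVec m p := by
  have hc := sum_tip (p - 1) (fun j => chebS m (p - 1 - j))
  have h0 : 0 < p - 1 := by omega
  have hs : chebS m (p + 1) = m * chebS m p - chebS m (p - 1) := by
    obtain ⟨d, rfl⟩ : ∃ d, p = d + 1 := ⟨p - 1, by omega⟩
    exact chebS_succ m d
  simp only [h0, if_true, Nat.sub_zero] at hc
  funext v
  rcases v with _ | i | i | i
  · simp only [Matrix.mulVec, dotProduct, Fintype.sum_option, Fintype.sum_sum_type, adjT, symVec,
      Pi.smul_apply, smul_eq_mul, hc]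
    linarith
  all_goals
    have := arm_eq m p i
    simp only [Matrix.mulVec, dotProduct, Fintype.sum_option, Fintype.sum_sum_type, adjT, symVec,
      Pi.smul_apply, smul_eq_mul, zero_mul, Finset.sum_const_zero]
    linarith

lemma adjT_nonneg (p : ℕ) (v w) : 0 ≤ adjT p p p v w := by
  have h1 : ∀ i, 0 ≤ tipEntry i := by intro i; unfold tipEntry; split_ifs <;> norm_num
  have h2 : ∀ i j, 0 ≤ pathEntry i j := by intro i j; unfold pathEntry; split_ifs <;> norm_num
  rcases v with _ | i | i | i <;> rcases w with _ | j | j | j <;> simp [adjT, h1, h2]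

/-- `m` is the good root for `p`. -/
def Good (p : ℕ) (m : ℝ) : Prop :=
  chebS m (p + 1) = 2 * chebS m (p - 1) ∧ ∀ k, 1 ≤ k → k ≤ p → 0 < chebS m k

lemma muT_eq (p : ℕ) (hp : 2 ≤ p) (m : ℝ) (h : Good p m) : muT p p p = m := by
  have hpos : ∀ v, 0 < symVec m p v := by
    intro v
    rcases v with _ | i | i | i
    · exact h.2 p (by omega) le_rfl
    all_goals exact h.2 _ (by omega) (by omega)
  have he := symVec_eig m p hp h.1
  apply IsGreatest.csSup_eq
  refine ⟨⟨symVec m p, ?_, he⟩, ?_⟩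
  · intro h0
    have := hpos none
    rw [h0] at this
    simp at this
  · rintro l ⟨y, hy, hl⟩
    exact eig_le _ (adjT_nonneg p) _ hpos m he l y hy hl

lemma chebS_formula (t : ℝ) (ht : t ≠ 0) (k : ℕ) :
    chebS (t + 1 / t) k * (t - 1 / t) = t ^ k - (1 / t) ^ k ∧
    chebS (t + 1 / t) (k + 1) * (t - 1 / t) = t ^ (k + 1) - (1 / t) ^ (k + 1) := by
  induction k with
  | zero => simp [chebS]
  | succ k ih =>
    refine ⟨ih.2, ?_⟩
    rw [chebS_succ]
    have : ((t + 1 / t) * chebS (t + 1 / t) (k + 1) - chebS (t + 1 / t) k) * (t - 1 / t)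
      = (t + 1 / t) * (chebS (t + 1 / t) (k + 1) * (t - 1 / t))
        - chebS (t + 1 / t) k * (t - 1 / t) := by ring
    rw [this, ih.1, ih.2]
    have h1 : t * (1 / t) = 1 := by field_simp
    generalize 1 / t = s at *
    linear_combination (t ^ k - s ^ k) * h1

/-- The key polynomial identity. -/
lemma F_formula (t : ℝ) (ht : t ≠ 0) (p : ℕ) :
    (chebS (t + 1 / t) (p + 2) - 2 * chebS (t + 1 / t) p) * (t - 1 / t) * t ^ (p + 2)
      = t ^ (2 * (p + 1)) * (t ^ 2 - 2) + (2 * t ^ 2 - 1) := by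
  have h1 := (chebS_formula t ht (p + 1)).2
  have h2 := (chebS_formula t ht p).1
  have e1 : (1 / t) ^ (p + 2) * t ^ (p + 2) = 1 := by rw [← mul_pow]; field_simp; simp
  have e2 : (1 / t) ^ p * t ^ p = 1 := by rw [← mul_pow]; field_simp; simp
  generalize 1 / t = s at *
  linear_combination t ^ (p + 2) * h1 - 2 * t ^ (p + 2) * h2 - e1 + 2 * t ^ 2 * e2

lemma L_eq : 3 / Real.sqrt 2 = Real.sqrt 2 + 1 / Real.sqrt 2 := by
  have h : Real.sqrt 2 ≠ 0 := by positivity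
  have h2 : Real.sqrt 2 * Real.sqrt 2 = 2 := Real.mul_self_sqrt (by norm_num)
  field_simp
  nlinarith

lemma L_sq : (3 / Real.sqrt 2) ^ 2 = 9 / 2 := by
  rw [div_pow, Real.sq_sqrt (by norm_num)]; norm_num

lemma F_L_pos (p : ℕ) : 2 * chebS (3 / Real.sqrt 2) p < chebS (3 / Real.sqrt 2) (p + 2) := by
  have h0 : (0:ℝ) < Real.sqrt 2 := by positivity
  have hf := F_formula (Real.sqrt 2) h0.ne' p
  rw [← L_eq, Real.sq_sqrt (by norm_num)] at hf
  have h2 : Real.sqrt 2 * Real.sqrt 2 = 2 := Real.mul_self_sqrt (by norm_num)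
  have h3 : 0 < Real.sqrt 2 - 1 / Real.sqrt 2 := by
    rw [sub_pos, div_lt_iff₀ h0]; linarith
  have h4 : 0 < (Real.sqrt 2 - 1 / Real.sqrt 2) * Real.sqrt 2 ^ (p + 2) := by positivity
  have : 0 < (chebS (3 / Real.sqrt 2) (p + 2) - 2 * chebS (3 / Real.sqrt 2) p) *
      ((Real.sqrt 2 - 1 / Real.sqrt 2) * Real.sqrt 2 ^ (p + 2)) := by
    rw [← mul_assoc, hf]; norm_num
  have := pos_of_mul_pos_left this h4.le
  linarith

lemma good_step (p : ℕ) (hp : 2 ≤ p) (m : ℝ) (h : Good p m) (hm0 : 0 < m)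
    (hm : m < 3 / Real.sqrt 2) : ∃ m', m < m' ∧ m' < 3 / Real.sqrt 2 ∧ Good (p + 1) m' := by
  obtain ⟨d, rfl⟩ : ∃ d, p = d + 2 := ⟨p - 2, by omega⟩
  obtain ⟨hF, hpos⟩ := h
  have hF' : chebS m (d + 3) = 2 * chebS m (d + 1) := hF
  have hpos' : ∀ k, 1 ≤ k → k ≤ d + 3 → 0 < chebS m k := by
    intro k h1 h2
    rcases Nat.lt_or_ge k (d + 3) with h3 | h3
    · exact hpos k h1 (by omega)
    · have : k = d + 3 := by omega
      rw [this, hF']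
      have := hpos (d + 1) (by omega) (by omega)
      linarith
  have e1 := chebS_succ m d
  have e2 := chebS_succ m (d + 1)
  have e3 := chebS_succ m (d + 2)
  have hneg : chebS m (d + 4) - 2 * chebS m (d + 2) < 0 := by
    have hS := hpos (d + 1) (by omega) (by omega)
    have hsq : m ^ 2 < 9 / 2 := by
      rw [← L_sq]; exact pow_lt_pow_left₀ hm hm0.le (by norm_num)
    have e4 : m * (chebS m (d + 4) - 2 * chebS m (d + 2)) = (2 * m ^ 2 - 9) * chebS m (d + 1) := by
      simp only [show d + 1 + 2 = d + 3 by omega, show d + 2 + 2 = d + 4 by omega,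
        show d + 2 + 1 = d + 3 by omega, show d + 1 + 1 = d + 2 by omega] at *
      rw [e3]
      have : m * chebS m (d + 2) = 3 * chebS m (d + 1) := by linarith
      rw [hF']
      linear_combination (-3) * this
    by_contra hcon
    push Not at hcon
    nlinarith [mul_nonneg hm0.le hcon]
  have hL := F_L_pos (d + 2)
  have hc : ContinuousOn (fun x => chebS x (d + 4) - 2 * chebS x (d + 2))
      (Set.Icc m (3 / Real.sqrt 2)) := by
    have h1 := (chebS_cont (d + 4)).1
    have h2 := (chebS_cont (d + 2)).1
    exact Continuous.continuousOn (by fun_prop)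
  have := intermediate_value_Ioo hm.le hc
  obtain ⟨m', ⟨h1, h2⟩, h3⟩ := this (show (0:ℝ) ∈ Set.Ioo _ _ from
    ⟨hneg, by simpa using hL⟩)
  refine ⟨m', h1, h2, ?_, ?_⟩
  · simp only at h3
    show chebS m' (d + 4) = 2 * chebS m' (d + 2)
    linarith
  · intro k hk1 hk2
    obtain ⟨j, rfl⟩ : ∃ j, k = j + 1 := ⟨k - 1, by omega⟩
    exact (chebS_mono h1.le (d + 3) hpos' j (by omega)).1

lemma good_exists (p : ℕ) (hp : 2 ≤ p) : ∃ m, 0 < m ∧ m < 3 / Real.sqrt 2 ∧ Good p m := by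
  induction p, hp using Nat.le_induction with
  | base =>
    have h3 : Real.sqrt 3 * Real.sqrt 3 = 3 := Real.mul_self_sqrt (by norm_num)
    refine ⟨Real.sqrt 3, by positivity, ?_, ?_, ?_⟩
    · refine lt_of_pow_lt_pow_left₀ 2 (by positivity) ?_
      rw [L_sq, Real.sq_sqrt (by norm_num)]; norm_num
    · simp [chebS]; linarith
    · intro k h1 h2
      interval_cases k <;> simp [chebS]
  | succ p hp ih =>
    obtain ⟨m, h0, h1, h2⟩ := ih
    obtain ⟨m', h3, h4, h5⟩ := good_step p hp m h2 h0 h1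
    exact ⟨m', h0.trans h3, h4, h5⟩

lemma muT_good (p : ℕ) (hp : 2 ≤ p) :
    0 < muT p p p ∧ muT p p p < 3 / Real.sqrt 2 ∧ Good p (muT p p p) := by
  obtain ⟨m, h0, h1, h2⟩ := good_exists p hp
  rw [muT_eq p hp m h2]
  exact ⟨h0, h1, h2⟩

lemma muT_strict (p : ℕ) (hp : 2 ≤ p) : muT p p p < muT (p + 1) (p + 1) (p + 1) := by
  obtain ⟨h0, h1, h2⟩ := muT_good p hp
  obtain ⟨m', h3, h4, h5⟩ := good_step p hp _ h2 h0 h1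
  rw [muT_eq (p + 1) (by omega) m' h5]
  exact h3

lemma muT_three : muT 3 3 3 = 2 := by
  apply muT_eq 3 (by norm_num)
  refine ⟨by norm_num [chebS], ?_⟩
  intro k h1 h2
  interval_cases k <;> norm_num [chebS]

lemma muT_ge (p : ℕ) (hp : 4 ≤ p) : muT 4 4 4 ≤ muT p p p := by
  induction p, hp using Nat.le_induction with
  | base => exact le_rfl
  | succ p hp ih => exact ih.trans (muT_strict p (by omega)).le

/-- Parametrisation `m = t + 1/t`. -/
lemma muT_param : ∃ c : ℝ, 1 < c ∧ ∀ p, 4 ≤ p → ∃ t : ℝ, c ≤ t ∧ t < Real.sqrt 2 ∧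
    muT p p p = t + 1 / t ∧ t ^ (2 * p) * (2 - t ^ 2) = 2 * t ^ 2 - 1 := by
  refine ⟨muT 4 4 4 / 2, ?_, ?_⟩
  · have := muT_strict 3 (by norm_num)
    rw [muT_three] at this
    norm_num at this
    linarith
  · intro p hp
    have h4 : 2 < muT 4 4 4 := by
      have := muT_strict 3 (by norm_num)
      rwa [muT_three] at this
    have hge := muT_ge p hp
    obtain ⟨h0, h1, h2⟩ := muT_good p (by omega)
    set m := muT p p p with hmdef
    have hsq : Real.sqrt (m ^ 2 - 4) ^ 2 = m ^ 2 - 4 := Real.sq_sqrt (by nlinarith)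
    have hnn := Real.sqrt_nonneg (m ^ 2 - 4)
    set s := Real.sqrt (m ^ 2 - 4)
    have ht1 : 1 < (m + s) / 2 := by linarith
    have hct : muT 4 4 4 / 2 ≤ (m + s) / 2 := by linarith
    have hmt : m = (m + s) / 2 + 1 / ((m + s) / 2) := by
      have : m + s ≠ 0 := by linarith
      field_simp
      nlinarith
    set t := (m + s) / 2 with htdef
    have ht0 : 0 < t := by linarith
    refine ⟨t, hct, ?_, hmt, ?_⟩
    · by_contra hcon
      push Not at hcon
      rw [hmt, L_eq] at h1
      have hq : 1 < Real.sqrt 2 := by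
        rw [Real.lt_sqrt] <;> norm_num
      have : t + 1 / t - (Real.sqrt 2 + 1 / Real.sqrt 2)
          = (t - Real.sqrt 2) * (t * Real.sqrt 2 - 1) / (t * Real.sqrt 2) := by
        field_simp
        ring
      have h5 : 0 ≤ (t - Real.sqrt 2) * (t * Real.sqrt 2 - 1) / (t * Real.sqrt 2) := by
        apply div_nonneg _ (by positivity)
        apply mul_nonneg (by linarith)
        nlinarith
      linarith
    · obtain ⟨d, rfl⟩ : ∃ d, p = d + 1 := ⟨p - 1, by omega⟩
      have hf := F_formula t ht0.ne' d
      rw [← hmt] at hf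
      have hF : chebS m (d + 2) = 2 * chebS m d := h2.1
      rw [hF] at hf
      linarith

lemma muT_quant (y₀ : ℝ) (hy : y₀ ∈ Set.Ioo (1/2 : ℝ) 1) :
    ∃ p₀ : ℕ, ∀ p : ℕ, p₀ ≤ p → 3 / Real.sqrt 2 - 2 * y₀ ^ p < muT p p p := by
  obtain ⟨hy1, hy2⟩ := hy
  obtain ⟨c, hc, H⟩ := muT_param
  obtain ⟨y, hya, hyb⟩ := exists_between hy1
  have hy0 : 0 < y := by linarith
  have hyi : 1 / y < 2 := by rw [div_lt_iff₀ hy0]; linarith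
  have T1 : Filter.Tendsto (fun p : ℕ => 3 * (1 / c) ^ p) Filter.atTop (nhds (3 * 0)) := by
    apply Filter.Tendsto.const_mul
    apply tendsto_pow_atTop_nhds_zero_of_lt_one (by positivity)
    rw [div_lt_one (by linarith)]; exact hc
  have T2 : Filter.Tendsto (fun p : ℕ => (y / y₀) ^ p) Filter.atTop (nhds 0) := by
    apply tendsto_pow_atTop_nhds_zero_of_lt_one (div_nonneg hy0.le (by linarith))
    rw [div_lt_one (by linarith)]; exact hyb
  have E1 := T1.eventually (gt_mem_nhds (show 3 * 0 < 2 - 1 / y by linarith))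
  have E2 := T2.eventually (gt_mem_nhds (show (0:ℝ) < 2 / 3 by norm_num))
  obtain ⟨p₀, hp₀⟩ := Filter.eventually_atTop.1 (E1.and E2)
  refine ⟨max p₀ 4, fun p hp => ?_⟩
  obtain ⟨F1, F2⟩ := hp₀ p (le_trans (le_max_left _ _) hp)
  obtain ⟨t, hct, ht2, hmt, hid⟩ := H p (le_trans (le_max_right _ _) hp)
  have ht1 : 1 < t := by linarith
  have ht0 : 0 < t := by linarith
  have hsq2 : Real.sqrt 2 * Real.sqrt 2 = 2 := Real.mul_self_sqrt (by norm_num)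
  have htt : t ^ 2 < 2 := by nlinarith
  have B1 : 2 - t ^ 2 ≤ 3 * (1 / t ^ 2) ^ p := by
    rw [one_div, inv_pow, ← pow_mul, ← div_eq_mul_inv, le_div_iff₀ (by positivity)]
    linarith
  have B2 : 1 / t ^ 2 ≤ 1 / c := by
    apply one_div_le_one_div_of_le (by linarith)
    nlinarith
  have B3 : (1 / t ^ 2) ^ p ≤ (1 / c) ^ p := pow_le_pow_left₀ (by positivity) B2 p
  have B4 : 1 / y < t ^ 2 := by linarith
  have B5 : 1 / t ^ 2 ≤ y := by
    rw [div_lt_iff₀ hy0] at B4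
    rw [div_le_iff₀ (by positivity)]; linarith
  have B6 : (1 / t ^ 2) ^ p ≤ y ^ p := pow_le_pow_left₀ (by positivity) B5 p
  have hyp : 0 < y₀ ^ p := pow_pos (by linarith) p
  rw [div_pow, div_lt_iff₀ hyp] at F2
  have B7 : 3 / Real.sqrt 2 - muT p p p ≤ 2 - t ^ 2 := by
    rw [hmt, L_eq]
    have : Real.sqrt 2 + 1 / Real.sqrt 2 - (t + 1 / t)
      = (Real.sqrt 2 - t) * (1 - 1 / (t * Real.sqrt 2)) := by
      field_simp
      ring
    rw [this]
    have h1 : 0 ≤ 1 / (t * Real.sqrt 2) := by positivity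
    have h2 : (Real.sqrt 2 - t) * (1 - 1 / (t * Real.sqrt 2)) ≤ Real.sqrt 2 - t := by
      nlinarith
    nlinarith
  linarith

theorem muT_ppp_tendsto_three_over_sqrt_two :
    (∀ p : ℕ, 2 ≤ p → muT p p p < muT (p + 1) (p + 1) (p + 1)) ∧
    (∀ p : ℕ, 2 ≤ p → muT p p p < 3 / Real.sqrt 2) ∧
    Filter.Tendsto (fun p : ℕ => muT p p p) Filter.atTop (nhds (3 / Real.sqrt 2)) ∧
    ∀ y₀ : ℝ, y₀ ∈ Set.Ioo (1/2 : ℝ) 1 →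
      ∃ p₀ : ℕ, ∀ p : ℕ, p₀ ≤ p → 3 / Real.sqrt 2 - 2 * y₀ ^ p < muT p p p := by
  refine ⟨muT_strict, fun p hp => (muT_good p hp).2.1, ?_, muT_quant⟩
  obtain ⟨p₀, h⟩ := muT_quant (3 / 4) ⟨by norm_num, by norm_num⟩
  have T : Filter.Tendsto (fun p : ℕ => 3 / Real.sqrt 2 - 2 * (3 / 4 : ℝ) ^ p) Filter.atTop
      (nhds (3 / Real.sqrt 2 - 2 * 0)) := by
    apply Filter.Tendsto.const_sub
    apply Filter.Tendsto.const_mul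
    exact tendsto_pow_atTop_nhds_zero_of_lt_one (by norm_num) (by norm_num)
  rw [mul_zero, sub_zero] at T
  refine tendsto_of_tendsto_of_tendsto_of_le_of_le' T tendsto_const_nhds ?_ ?_
  · filter_upwards [Filter.eventually_ge_atTop p₀] with p hp using (h p hp).le
  · filter_upwards [Filter.eventually_ge_atTop 2] with p hp using (muT_good p hp).2.1.le
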